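/- For all a, b ∈ ℕ and every finite simple graph G, the inequality w_{2a+b}(G) · w_b(G) ≤ w_0(G) · w_{2(a+b)}(G) holds, where w_j(G) denotes the number of walks of length j in G. -/

import Mathlib

open Finset

/-- The number of walks of length `k` in a graph `G`, computed as
`𝟙ᵀ A^k 𝟙 = ∑_{x,y} (A^k)_{x,y}` for the adjacency matrix `A`. -/
noncomputable def walkNum {V : Type*} [Fintype V] [DecidableEq V] (G : SimpleGraph V)
    [DecidableRel G.Adj] (k : ℕ) : ℝ :=
  ∑ x : V, ∑ y : V, ((G.adjMatrix ℝ) ^ k) x y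

/-!
The number of walks of length `k` is `⟪𝟙, A ^ k 𝟙⟫`, and the inequality holds for every symmetric
operator `T` and vector `x`, by the Cauchy–Schwarz inequality alone. Indeed
`‖T ^ (k + 1) x‖ ^ 2 = ⟪T ^ k x, T ^ (k + 2) x⟫` shows that the sequence `‖T ^ k x‖` is log-convex,
hence `‖T ^ p x‖ * ‖T ^ q x‖ ≤ ‖x‖ * ‖T ^ (p + q) x‖`. If `m + n` is even, then
`⌊m/2⌋ + ⌈n/2⌉ = ⌈m/2⌉ + ⌊n/2⌋ = (m + n)/2`; splitting `⟪x, T ^ m x⟫` as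
`⟪T ^ ⌊m/2⌋ x, T ^ ⌈m/2⌉ x⟫`, and `⟪x, T ^ n x⟫` likewise, and pairing the four norms crosswise
bounds the product of the two by `‖x‖ ^ 2 * ‖T ^ ((m + n)/2) x‖ ^ 2 = ‖x‖ ^ 2 * ⟪x, T ^ (m + n) x⟫`.
-/

section LogConvexSequence

variable {R : Type*} [CommRing R] [LinearOrder R] [IsStrictOrderedRing R] {u : ℕ → R}

theorem succ_mul_le_mul_succ_of_sq_le_mul (hu₀ : ∀ k, 0 ≤ u k)
    (hu : ∀ k, u (k + 1) ^ 2 ≤ u k * u (k + 2)) {k l : ℕ} (hkl : k ≤ l) :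
    u (k + 1) * u l ≤ u k * u (l + 1) := by
  induction l, hkl using Nat.le_induction with
  | base => exact (mul_comm _ _).le
  | succ l _ ih =>
    rcases (hu₀ l).eq_or_lt with hl | hl
    · have hl_succ : u (l + 1) = 0 := by
        simpa [← hl, sq_nonpos_iff] using hu l
      simpa [hl_succ] using mul_nonneg (hu₀ k) (hu₀ (l + 2))
    · refine le_of_mul_le_mul_right ?_ hl
      calc
        u (k + 1) * u (l + 1) * u l = u (k + 1) * u l * u (l + 1) := by ring
        _ ≤ u k * u (l + 1) * u (l + 1) := mul_le_mul_of_nonneg_right ih (hu₀ _)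
        _ = u k * u (l + 1) ^ 2 := by ring
        _ ≤ u k * (u l * u (l + 2)) := mul_le_mul_of_nonneg_left (hu l) (hu₀ k)
        _ = u k * u (l + 1 + 1) * u l := by ring

theorem mul_le_zero_mul_add_of_sq_le_mul (hu₀ : ∀ k, 0 ≤ u k)
    (hu : ∀ k, u (k + 1) ^ 2 ≤ u k * u (k + 2)) (p q : ℕ) :
    u p * u q ≤ u 0 * u (p + q) := by
  wlog hpq : p ≤ q generalizing p q
  · simpa [mul_comm (u p), add_comm p] using this q p (le_of_not_ge hpq)
  induction p generalizing q with
  | zero => simp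
  | succ p ih =>
    calc
      u (p + 1) * u q ≤ u p * u (q + 1) :=
        succ_mul_le_mul_succ_of_sq_le_mul hu₀ hu (Nat.le_of_succ_le hpq)
      _ ≤ u 0 * u (p + (q + 1)) := ih (q + 1) (by lia)
      _ = u 0 * u (p + 1 + q) := by rw [add_right_comm, add_assoc]

end LogConvexSequence

section SymmetricOperator

variable {𝕜 E : Type*} [RCLike 𝕜] [SeminormedAddCommGroup E] [InnerProductSpace 𝕜 E]
  {T : E →ₗ[𝕜] E}

open scoped InnerProductSpace

theorem inner_pow_apply_pow_apply (hT : T.IsSymmetric) (x : E) (i j : ℕ) :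
    ⟪(T ^ i) x, (T ^ j) x⟫_𝕜 = ⟪x, (T ^ (i + j)) x⟫_𝕜 := by
  rw [hT.pow i, pow_add, Module.End.mul_apply]

theorem norm_inner_pow_add_apply_le (hT : T.IsSymmetric) (x : E) (i j : ℕ) :
    ‖⟪x, (T ^ (i + j)) x⟫_𝕜‖ ≤ ‖(T ^ i) x‖ * ‖(T ^ j) x‖ := by
  rw [← inner_pow_apply_pow_apply hT]
  exact norm_inner_le_norm _ _

theorem norm_pow_apply_sq (hT : T.IsSymmetric) (x : E) (k : ℕ) :
    ‖(T ^ k) x‖ ^ 2 = RCLike.re ⟪x, (T ^ (k + k)) x⟫_𝕜 := by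
  rw [← inner_pow_apply_pow_apply hT, inner_self_eq_norm_sq]

theorem norm_pow_succ_apply_sq_le (hT : T.IsSymmetric) (x : E) (k : ℕ) :
    ‖(T ^ (k + 1)) x‖ ^ 2 ≤ ‖(T ^ k) x‖ * ‖(T ^ (k + 2)) x‖ := by
  rw [norm_pow_apply_sq hT, show k + 1 + (k + 1) = k + (k + 2) by ring]
  exact (RCLike.re_le_norm _).trans (norm_inner_pow_add_apply_le hT x k (k + 2))

theorem norm_pow_apply_mul_norm_pow_apply_le (hT : T.IsSymmetric) (x : E) (p q : ℕ) :
    ‖(T ^ p) x‖ * ‖(T ^ q) x‖ ≤ ‖x‖ * ‖(T ^ (p + q)) x‖ :=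
  mul_le_zero_mul_add_of_sq_le_mul (u := fun k ↦ ‖(T ^ k) x‖) (fun _ ↦ norm_nonneg _)
    (norm_pow_succ_apply_sq_le hT x) p q

theorem lagarias_inequality_general (hT : T.IsSymmetric) (x : E) {m n : ℕ} (hmn : Even (m + n)) :
    ‖⟪x, (T ^ m) x⟫_𝕜‖ * ‖⟪x, (T ^ n) x⟫_𝕜‖ ≤
      ‖x‖ ^ 2 * RCLike.re ⟪x, (T ^ (m + n)) x⟫_𝕜 := by
  obtain ⟨s, hs⟩ := hmn
  obtain ⟨i, j, k, l, rfl, rfl, hik, hjl⟩ :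
      ∃ i j k l, m = i + j ∧ n = k + l ∧ i + k = s ∧ j + l = s :=
    ⟨m / 2, (m + 1) / 2, (n + 1) / 2, n / 2, by lia, by lia, by lia, by lia⟩
  calc
    ‖⟪x, (T ^ (i + j)) x⟫_𝕜‖ * ‖⟪x, (T ^ (k + l)) x⟫_𝕜‖
      ≤ (‖(T ^ i) x‖ * ‖(T ^ j) x‖) * (‖(T ^ k) x‖ * ‖(T ^ l) x‖) := by
        gcongr <;> exact norm_inner_pow_add_apply_le hT x _ _
    _ = (‖(T ^ i) x‖ * ‖(T ^ k) x‖) * (‖(T ^ j) x‖ * ‖(T ^ l) x‖) := mul_mul_mul_comm ..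
    _ ≤ (‖x‖ * ‖(T ^ (i + k)) x‖) * (‖x‖ * ‖(T ^ (j + l)) x‖) := by
        gcongr ?_ * ?_ <;> exact norm_pow_apply_mul_norm_pow_apply_le hT x _ _
    _ = ‖x‖ ^ 2 * ‖(T ^ s) x‖ ^ 2 := by rw [hik, hjl]; ring
    _ = ‖x‖ ^ 2 * RCLike.re ⟪x, (T ^ (i + j + (k + l))) x⟫_𝕜 := by
        rw [norm_pow_apply_sq hT, hs]

end SymmetricOperator

section WalkNumber

open scoped InnerProductSpace

variable {V : Type*} [Fintype V] [DecidableEq V] (G : SimpleGraph V) [DecidableRel G.Adj]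

theorem isSymmetric_toEuclideanLin_adjMatrix :
    (Matrix.toEuclideanLin (G.adjMatrix ℝ)).IsSymmetric :=
  Matrix.isSymmetric_toEuclideanLin_iff.mpr G.isSymm_adjMatrix

theorem walkNum_eq_inner (k : ℕ) :
    walkNum G k = ⟪WithLp.toLp 2 (1 : V → ℝ),
      (Matrix.toEuclideanLin (G.adjMatrix ℝ) ^ k) (WithLp.toLp 2 1)⟫_ℝ := by
  rw [← Matrix.toLpLin_pow, Matrix.toLpLin_apply, EuclideanSpace.inner_eq_star_dotProduct]
  simp [walkNum, Matrix.mulVec, dotProduct]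

theorem walkNum_mul_walkNum_le {m n : ℕ} (hmn : Even (m + n)) :
    walkNum G m * walkNum G n ≤ walkNum G 0 * walkNum G (m + n) := by
  simp only [walkNum_eq_inner, pow_zero, Module.End.one_apply, real_inner_self_eq_norm_sq]
  exact (le_abs_self _).trans ((abs_mul _ _).trans_le
    (lagarias_inequality_general (isSymmetric_toEuclideanLin_adjMatrix G) _ hmn))

end WalkNumber

theorem lagarias_inequality (a b : ℕ)
    (V : Type) [Fintype V] [DecidableEq V] (G : SimpleGraph V) [DecidableRel G.Adj] :
    walkNum G (2 * a + b) * walkNum G b ≤ walkNum G 0 * walkNum G (2 * (a + b)) := by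
  rw [show 2 * (a + b) = 2 * a + b + b by ring]
  exact walkNum_mul_walkNum_le G ⟨a + b, by ring⟩
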